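/- arXiv:2407.11903 — 3 statements merged into one kernel-verified Lean document; each statement's English description precedes it below -/
import Mathlib

section
/- (Jörgens' theorem) Let u : ℝ² → ℝ be a smooth function satisfying det D²u(x) = 1 for every x ∈ ℝ². Then u is a quadratic polynomial, i.e. there exist a symmetric 2×2 real matrix A, a vector b ∈ ℝ², and c ∈ ℝ such that u(x) = (1/2)⟨A x, x⟩ + ⟨b, x⟩ + c for all x ∈ ℝ². -/
open Real

/-- Second partial derivative matrix (Hessian) of `u` at `x`. -/
noncomputable def hessianMatrix {n : ℕ} (u : EuclideanSpace ℝ (Fin n) → ℝ)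
    (x : EuclideanSpace ℝ (Fin n)) : Matrix (Fin n) (Fin n) ℝ :=
  Matrix.of fun i j =>
    fderiv ℝ (fun y => fderiv ℝ u y (EuclideanSpace.single j 1)) x (EuclideanSpace.single i 1)

/-- `u` is a quadratic polynomial. -/
def IsQuadraticPoly {n : ℕ} (u : EuclideanSpace ℝ (Fin n) → ℝ) : Prop :=
  ∃ (A : Matrix (Fin n) (Fin n) ℝ) (b : Fin n → ℝ) (c : ℝ), A.IsSymm ∧
    ∀ x, u x = (1/2) * (∑ i, ∑ j, A i j * x i * x j) + (∑ i, b i * x i) + c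

abbrev JE := EuclideanSpace ℝ (Fin 2)

noncomputable def jdx : JE →L[ℝ] ℝ := EuclideanSpace.proj 0
noncomputable def jdy : JE →L[ℝ] ℝ := EuclideanSpace.proj 1

lemma jdx_apply (z : JE) : jdx z = z 0 := rfl
lemma jdy_apply (z : JE) : jdy z = z 1 := rfl

lemma j_norm_sq (z : JE) : ‖z‖ ^ 2 = z 0 ^ 2 + z 1 ^ 2 := by
  rw [EuclideanSpace.norm_sq_eq]; simp [Fin.sum_univ_two]

lemma c_norm_sq (z : ℂ) : ‖z‖ ^ 2 = z.re ^ 2 + z.im ^ 2 := by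
  rw [Complex.sq_norm, Complex.normSq_apply]; ring

lemma j_mono (p q r s t : JE → ℝ)
    (hp : ∀ z, HasStrictFDerivAt p (r z • jdx + s z • jdy) z)
    (hq : ∀ z, HasStrictFDerivAt q (s z • jdx + t z • jdy) z)
    (hr : ∀ z, 0 < r z) (hd : ∀ z, r z * t z - s z ^ 2 = 1) (z w : JE) :
    0 ≤ (p z - p w) * (z 0 - w 0) + (q z - q w) * (z 1 - w 1) := by
  let f : ℝ → ℝ := fun τ => p (w + τ • (z - w)) * (z 0 - w 0) + q (w + τ • (z - w)) * (z 1 - w 1)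
  have hl : ∀ τ : ℝ, HasDerivAt (fun τ : ℝ => w + τ • (z - w)) (z - w) τ := fun τ => by
    simpa using ((hasDerivAt_id τ).smul_const (z - w)).const_add w
  have hf : ∀ τ, HasDerivAt f _ τ := fun τ =>
    (((hp _).hasFDerivAt.comp_hasDerivAt τ (hl τ)).mul_const (z 0 - w 0)).add
      (((hq _).hasFDerivAt.comp_hasDerivAt τ (hl τ)).mul_const (z 1 - w 1))
  have hm : Monotone f := by
    apply monotone_of_deriv_nonneg (fun τ => (hf τ).differentiableAt)
    intro τ
    rw [(hf τ).deriv]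
    simp only [add_apply, smul_apply, jdx_apply, jdy_apply,
      PiLp.sub_apply, smul_eq_mul]
    generalize w + τ • (z - w) = v
    have h1 := hr v
    have h2 := hd v
    generalize z 0 - w 0 = a
    generalize z 1 - w 1 = b
    have : 0 ≤ r v * ((r v * a + s v * b) * a + (s v * a + t v * b) * b) := by
      have : r v * ((r v * a + s v * b) * a + (s v * a + t v * b) * b)
        = (r v * a + s v * b) ^ 2 + b ^ 2 := by linear_combination b ^ 2 * h2
      rw [this]; positivity
    exact nonneg_of_mul_nonneg_right this h1
  have := hm (zero_le_one)
  simp only [f, zero_smul, one_smul, add_zero, add_sub_cancel] at this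
  linarith

lemma j_core (p q r s t : JE → ℝ)
    (hp : ∀ z, HasStrictFDerivAt p (r z • jdx + s z • jdy) z)
    (hq : ∀ z, HasStrictFDerivAt q (s z • jdx + t z • jdy) z)
    (hr : ∀ z, 0 < r z) (hd : ∀ z, r z * t z - s z ^ 2 = 1) (z : JE) :
    r z = r 0 ∧ s z = s 0 ∧ t z = t 0 := by
  have hmono := j_mono p q r s t hp hq hr hd
  have ht : ∀ z, 0 < t z := fun z => by
    have : 0 < r z * t z := by nlinarith [hd z, sq_nonneg (s z)]
    exact (mul_pos_iff_of_pos_left (hr z)).1 this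
  let F : JE → ℂ := fun z => (jdx z + p z) • (1 : ℂ) + (jdy z + q z) • Complex.I
  let H : JE → ℂ := fun z => (jdx z - p z) • (1 : ℂ) + (q z - jdy z) • Complex.I
  let DF : JE → JE →L[ℝ] ℂ := fun z => (jdx + (r z • jdx + s z • jdy)).smulRight (1 : ℂ)
    + (jdy + (s z • jdx + t z • jdy)).smulRight Complex.I
  let DH : JE → JE →L[ℝ] ℂ := fun z => (jdx - (r z • jdx + s z • jdy)).smulRight (1 : ℂ)
    + ((s z • jdx + t z • jdy) - jdy).smulRight Complex.I
  have hF : ∀ z, HasStrictFDerivAt F (DF z) z := fun z =>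
    ((jdx.hasStrictFDerivAt.add (hp z)).smul_const (1 : ℂ)).add
      ((jdy.hasStrictFDerivAt.add (hq z)).smul_const Complex.I)
  have hH : ∀ z, HasStrictFDerivAt H (DH z) z := fun z =>
    ((jdx.hasStrictFDerivAt.sub (hp z)).smul_const (1 : ℂ)).add
      (((hq z).sub jdy.hasStrictFDerivAt).smul_const Complex.I)
  have hFre : ∀ z, (F z).re = z 0 + p z := fun z => by simp [F, jdx_apply]
  have hFim : ∀ z, (F z).im = z 1 + q z := fun z => by simp [F, jdy_apply]
  have hHre : ∀ z, (H z).re = z 0 - p z := fun z => by simp [H, jdx_apply]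
  have hHim : ∀ z, (H z).im = q z - z 1 := fun z => by simp [H, jdy_apply]
  have hDFre : ∀ z h, (DF z h).re = (1 + r z) * h 0 + s z * h 1 := fun z h => by
    simp [DF, jdx_apply, jdy_apply]; ring
  have hDFim : ∀ z h, (DF z h).im = s z * h 0 + (1 + t z) * h 1 := fun z h => by
    simp [DF, jdx_apply, jdy_apply]; ring
  have hDHre : ∀ z h, (DH z h).re = (1 - r z) * h 0 - s z * h 1 := fun z h => by
    simp [DH, jdx_apply, jdy_apply]; ring
  have hDHim : ∀ z h, (DH z h).im = s z * h 0 + (t z - 1) * h 1 := fun z h => by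
    simp [DH, jdx_apply, jdy_apply]; ring
  have hanti : ∀ z w, ‖z - w‖ ≤ ‖F z - F w‖ := fun z w => by
    apply le_of_sq_le_sq _ (norm_nonneg _)
    rw [j_norm_sq, c_norm_sq]
    simp only [Complex.sub_re, Complex.sub_im, hFre, hFim, PiLp.sub_apply]
    nlinarith [hmono z w, sq_nonneg (p z - p w), sq_nonneg (q z - q w)]
  have hlip : ∀ z w, ‖H z - H w‖ ≤ ‖F z - F w‖ := fun z w => by
    apply le_of_sq_le_sq _ (norm_nonneg _)
    rw [c_norm_sq, c_norm_sq]
    simp only [Complex.sub_re, Complex.sub_im, hFre, hFim, hHre, hHim]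
    nlinarith [hmono z w]
  have hFanti : AntilipschitzWith 1 F := AntilipschitzWith.of_le_mul_dist fun z w => by
    simpa [dist_eq_norm] using hanti z w
  have hinj : ∀ z, Function.Injective (DF z) := fun z => by
    rw [injective_iff_map_eq_zero]
    intro h hh
    have h1 := hDFre z h
    have h2 := hDFim z h
    rw [hh] at h1 h2
    simp only [Complex.zero_re, Complex.zero_im] at h1 h2
    have hD : 0 < 2 + r z + t z := by linarith [hr z, ht z]
    have e0 : (2 + r z + t z) * h 0 = 0 := by
      linear_combination (-(1 + t z)) * h1 + s z * h2 - h 0 * hd z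
    have e1 : (2 + r z + t z) * h 1 = 0 := by
      linear_combination (-(1 + r z)) * h2 + s z * h1 - h 1 * hd z
    ext i
    fin_cases i
    · simpa using (mul_eq_zero.1 e0).resolve_left hD.ne'
    · simpa using (mul_eq_zero.1 e1).resolve_left hD.ne'
  have hequiv : ∀ z, ∃ e : JE ≃L[ℝ] ℂ, (e : JE →L[ℝ] ℂ) = DF z := fun z => by
    refine ⟨(LinearEquiv.ofInjectiveOfFinrankEq (DF z : JE →ₗ[ℝ] ℂ) (hinj z)
      (by simp)).toContinuousLinearEquiv, ?_⟩
    ext h; rfl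
  choose e he using hequiv
  have hF' : ∀ z, HasStrictFDerivAt F (e z : JE →L[ℝ] ℂ) z := fun z => by rw [he]; exact hF z
  have hFc : Continuous F := continuous_iff_continuousAt.2 fun z => (hF z).continuousAt
  have hopen : IsOpenMap F := isOpenMap_of_hasStrictFDerivAt_equiv hF'
  have hproper : IsProperMap F := by
    rw [isProperMap_iff_tendsto_cocompact]
    refine ⟨hFc, ?_⟩
    have := hFanti.tendsto_cobounded
    rwa [← Metric.cobounded_eq_cocompact, ← Metric.cobounded_eq_cocompact]
  have hrange : Set.range F = Set.univ :=
    IsClopen.eq_univ ⟨hproper.isClosedMap.isClosed_range, hopen.isOpen_range⟩ (Set.range_nonempty F)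
  have hsurj : Function.Surjective F := Set.range_eq_univ.1 hrange
  choose g hg using hsurj
  have hgF : ∀ z, g (F z) = z := fun z => hFanti.injective (hg _)
  have hgc : Continuous g := (hFanti.to_rightInverse hg).continuous
  let G : ℂ → ℂ := fun ζ => H (g ζ)
  let c : JE → ℂ := fun z => ⟨(t z - r z) / (2 + r z + t z), 2 * s z / (2 + r z + t z)⟩
  have hc : ∀ z h, DH z h = c z * DF z h := fun z h => by
    have hD : 2 + r z + t z ≠ 0 := by linarith [hr z, ht z]
    apply Complex.ext
    · rw [Complex.mul_re, hDHre, hDFre, hDFim]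
      simp only [c]
      field_simp
      linear_combination (-2 * h 0) * hd z
    · rw [Complex.mul_im, hDHim, hDFre, hDFim]
      simp only [c]
      field_simp
      linear_combination (2 * h 1) * hd z
  have hG : ∀ ζ, HasDerivAt G (c (g ζ)) ζ := fun ζ => by
    have h1 : HasFDerivAt g ((e (g ζ)).symm : ℂ →L[ℝ] JE) ζ :=
      HasFDerivAt.of_local_left_inverse hgc.continuousAt (hF' (g ζ)).hasFDerivAt
        (Filter.Eventually.of_forall hg)
    have h2 : HasFDerivAt G _ ζ := (hH (g ζ)).hasFDerivAt.comp ζ h1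
    rw [hasDerivAt_iff_hasFDerivAt]
    refine hasFDerivAt_of_restrictScalars ℝ h2 ?_
    refine ContinuousLinearMap.ext fun v => ?_
    have : DF (g ζ) ((e (g ζ)).symm v) = v := by
      rw [← he]; simp
    simp [hc, this, mul_comm]
  have hGd : Differentiable ℂ G := fun ζ => (hG ζ).differentiableAt
  have hGl : LipschitzWith 1 G := LipschitzWith.of_dist_le_mul fun a b => by
    simpa [dist_eq_norm, hg] using hlip (g a) (g b)
  have hbd : Bornology.IsBounded (Set.range (deriv G)) := by
    rw [isBounded_iff_forall_norm_le]
    refine ⟨1, ?_⟩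
    rintro _ ⟨ζ, rfl⟩
    simpa using norm_deriv_le_of_lipschitz (x₀ := ζ) hGl
  have hconst := hGd.deriv.apply_eq_apply_of_bounded hbd
  have hcc : c z = c 0 := by
    have := hconst (F z) (F 0)
    rwa [(hG _).deriv, (hG _).deriv, hgF, hgF] at this
  have e1 := congrArg Complex.re hcc
  have e2 := congrArg Complex.im hcc
  simp only [c] at e1 e2
  have P : 0 < 2 + r z + t z := by linarith [hr z, ht z]
  have P0 : 0 < 2 + r 0 + t 0 := by linarith [hr 0, ht 0]
  have hn : ∀ z, 0 < 2 + r z + t z → ((t z - r z) / (2 + r z + t z)) ^ 2 +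
      (2 * s z / (2 + r z + t z)) ^ 2 = 1 - 4 / (2 + r z + t z) := fun z P => by
    field_simp
    linear_combination (-4) * hd z
  have k1 := hn z P
  have k2 := hn 0 P0
  rw [e1, e2, k2] at k1
  have k3 : 2 + r z + t z = 2 + r 0 + t 0 := by
    field_simp at k1
    linarith
  rw [k3] at e1 e2
  field_simp at e1 e2
  refine ⟨by linarith, by linarith, by linarith⟩

/-- The case of positive `u_xx`. -/
lemma j_pos (u : JE → ℝ) (hu : ContDiff ℝ (⊤ : ℕ∞) u)
    (hMA : ∀ x, (hessianMatrix u x).det = 1) (hpos : ∀ x, 0 < hessianMatrix u x 0 0) :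
    IsQuadraticPoly u := by
  have hlin : ∀ (L : JE →L[ℝ] ℝ), L = L (EuclideanSpace.single 0 1) • jdx +
      L (EuclideanSpace.single 1 1) • jdy := fun L => by
    refine ContinuousLinearMap.ext fun h => ?_
    have : h = h 0 • EuclideanSpace.single 0 (1:ℝ) + h 1 • EuclideanSpace.single 1 (1:ℝ) := by
      ext i; fin_cases i <;> simp
    conv_lhs => rw [this]
    simp only [map_add, map_smul, add_apply, smul_apply,
      jdx_apply, jdy_apply, smul_eq_mul]
    ring
  have hdu : ContDiff ℝ (⊤ : ℕ∞) (fderiv ℝ u) := hu.fderiv_right (by simp)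
  let p : Fin 2 → JE → ℝ := fun j y => fderiv ℝ u y (EuclideanSpace.single j 1)
  have hpc : ∀ j, ContDiff ℝ (⊤ : ℕ∞) (p j) := fun j => hdu.clm_apply contDiff_const
  have hsymm : ∀ x, hessianMatrix u x 0 1 = hessianMatrix u x 1 0 := fun x => by
    have h := (hu.contDiffAt (x := x)).isSymmSndFDerivAt (by simp; exact WithTop.coe_le_coe.2 (OrderTop.le_top (2 : ℕ∞)))
    have h1 := h (EuclideanSpace.single 0 1) (EuclideanSpace.single 1 1)
    have hd : DifferentiableAt ℝ (fderiv ℝ u) x := hdu.differentiable (by simp) x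
    have h2 : ∀ i j, hessianMatrix u x i j = fderiv ℝ (fderiv ℝ u) x
        (EuclideanSpace.single i 1) (EuclideanSpace.single j 1) := fun i j => by
      simp only [hessianMatrix, Matrix.of_apply]
      rw [fderiv_clm_apply hd (differentiableAt_const _)]
      simp
    rw [h2, h2, h1]
  have hp : ∀ j x, HasStrictFDerivAt (p j)
      (hessianMatrix u x 0 j • jdx + hessianMatrix u x 1 j • jdy) x := fun j x => by
    have h := (hpc j).contDiffAt.hasStrictFDerivAt (x := x) (by simp)
    rw [hlin (fderiv ℝ (p j) x)] at h
    exact h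
  have hdet : ∀ x, hessianMatrix u x 0 0 * hessianMatrix u x 1 1 - hessianMatrix u x 1 0 ^ 2 = 1 :=
    fun x => by
      have := hMA x
      rw [Matrix.det_fin_two, hsymm] at this
      linarith
  have core := j_core (p 0) (p 1) (fun x => hessianMatrix u x 0 0) (fun x => hessianMatrix u x 1 0)
    (fun x => hessianMatrix u x 1 1) (hp 0) (fun x => by simpa [hsymm] using hp 1 x) hpos hdet
  let A := hessianMatrix u 0
  have hA : ∀ x, hessianMatrix u x = A := fun x => by
    ext i j
    have := core x
    have h1 := hsymm x
    have h2 := hsymm 0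
    fin_cases i <;> fin_cases j <;> simp [A] <;> linarith
  have hAs : A 0 1 = A 1 0 := hsymm 0
  have hp' : ∀ j x, p j x = A 0 j * x 0 + A 1 j * x 1 + p j 0 := fun j x => by
    have hz : ∀ y, HasFDerivAt (fun y => p j y - (A 0 j • jdx + A 1 j • jdy) y) (0 : JE →L[ℝ] ℝ) y :=
      fun y => by
        have := (hp j y).hasFDerivAt.sub (A 0 j • jdx + A 1 j • jdy).hasFDerivAt
        rw [hA, sub_self] at this
        exact this
    have := is_const_of_fderiv_eq_zero (fun y => (hz y).differentiableAt) (fun y => (hz y).fderiv) x 0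
    simp [jdx_apply, jdy_apply] at this
    linarith
  refine ⟨A, fun j => p j 0, u 0, ?_, ?_⟩
  · ext i j
    fin_cases i <;> fin_cases j <;> simp [Matrix.transpose_apply, hAs]
  · intro x
    let Q : JE → ℝ := fun y => (1 / 2) * (A 0 0 * (jdx y * jdx y) + 2 * A 1 0 * (jdx y * jdy y)
      + A 1 1 * (jdy y * jdy y)) + (p 0 0 * jdx y + p 1 0 * jdy y)
    have hQ : ∀ y, HasFDerivAt Q _ y := fun y =>
      ((((((jdx.hasFDerivAt (x := y)).mul (jdx.hasFDerivAt (x := y))).const_mul (A 0 0)).add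
        (((jdx.hasFDerivAt (x := y)).mul (jdy.hasFDerivAt (x := y))).const_mul (2 * A 1 0))).add
        (((jdy.hasFDerivAt (x := y)).mul (jdy.hasFDerivAt (x := y))).const_mul (A 1 1))).const_mul
          (1 / 2)).add
        (((jdx.hasFDerivAt (x := y)).const_mul (p 0 0)).add
          ((jdy.hasFDerivAt (x := y)).const_mul (p 1 0)))
    have hdu' : ∀ y, HasFDerivAt u (p 0 y • jdx + p 1 y • jdy) y := fun y => by
      have h := (hu.differentiable (by simp) y).hasFDerivAt
      rw [hlin (fderiv ℝ u y)] at h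
      exact h
    have hz : ∀ y, HasFDerivAt (fun y => u y - Q y) (0 : JE →L[ℝ] ℝ) y := fun y => by
      refine ((hdu' y).sub (hQ y)).congr_fderiv ?_
      refine ContinuousLinearMap.ext fun h => ?_
      simp [jdx_apply, jdy_apply]
      rw [hp' 0 y, hp' 1 y, hAs]
      ring
    have := is_const_of_fderiv_eq_zero (fun y => (hz y).differentiableAt) (fun y => (hz y).fderiv) x 0
    simp [Q, jdx_apply, jdy_apply] at this
    simp [Fin.sum_univ_two, hAs]
    linarith

lemma j_neg (u : JE → ℝ) (x : JE) : hessianMatrix (fun y => - u y) x = - hessianMatrix u x := by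
  ext i j
  have : (fun y => fderiv ℝ (fun y => - u y) y (EuclideanSpace.single j 1)) =
      fun y => - (fderiv ℝ u y (EuclideanSpace.single j 1)) := by
    funext y; rw [fderiv_fun_neg]; rfl
  simp only [hessianMatrix, Matrix.of_apply, Matrix.neg_apply]
  rw [this, fderiv_fun_neg]; rfl

/-- Jörgens' theorem. -/
theorem jorgens (u : EuclideanSpace ℝ (Fin 2) → ℝ)
    (hu : ContDiff ℝ (⊤ : ℕ∞) u)
    (hMA : ∀ x, (hessianMatrix u x).det = 1) :
    IsQuadraticPoly u := by
  have hc : Continuous fun x => hessianMatrix u x 0 0 := by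
    have hdu : ContDiff ℝ (⊤ : ℕ∞) (fderiv ℝ u) := hu.fderiv_right (by simp)
    have h1 : ContDiff ℝ (⊤ : ℕ∞) (fun y => fderiv ℝ u y (EuclideanSpace.single 0 1)) :=
      hdu.clm_apply contDiff_const
    have h2 : ContDiff ℝ (⊤ : ℕ∞)
        (fderiv ℝ (fun y => fderiv ℝ u y (EuclideanSpace.single (0 : Fin 2) 1))) :=
      h1.fderiv_right (by simp)
    exact (h2.clm_apply (contDiff_const (c := EuclideanSpace.single (0 : Fin 2) (1 : ℝ)))).continuous
  have hsymm : ∀ x, hessianMatrix u x 0 1 = hessianMatrix u x 1 0 := fun x => by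
    have hdu : ContDiff ℝ (⊤ : ℕ∞) (fderiv ℝ u) := hu.fderiv_right (by simp)
    have h := (hu.contDiffAt (x := x)).isSymmSndFDerivAt (by simp; exact WithTop.coe_le_coe.2 (OrderTop.le_top (2 : ℕ∞)))
    have h1 := h (EuclideanSpace.single 0 1) (EuclideanSpace.single 1 1)
    have hd : DifferentiableAt ℝ (fderiv ℝ u) x := hdu.differentiable (by simp) x
    have h2 : ∀ i j, hessianMatrix u x i j = fderiv ℝ (fderiv ℝ u) x
        (EuclideanSpace.single i 1) (EuclideanSpace.single j 1) := fun i j => by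
      simp only [hessianMatrix, Matrix.of_apply]
      rw [fderiv_clm_apply hd (differentiableAt_const _)]
      simp
    rw [h2, h2, h1]
  have hne : ∀ x, hessianMatrix u x 0 0 ≠ 0 := fun x h0 => by
    have := hMA x
    rw [Matrix.det_fin_two, hsymm, h0] at this
    nlinarith [sq_nonneg (hessianMatrix u x 1 0)]
  have hsign : ∀ x y, 0 < hessianMatrix u x 0 0 → 0 < hessianMatrix u y 0 0 := fun x y hx => by
    by_contra hy
    obtain ⟨z, hz⟩ := mem_range_of_exists_le_of_exists_ge hc ⟨y, not_lt.1 hy⟩ ⟨x, hx.le⟩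
    exact hne z hz
  by_cases h0 : 0 < hessianMatrix u 0 0 0
  · exact j_pos u hu hMA fun x => hsign 0 x h0
  · have hneg : ∀ x, hessianMatrix u x 0 0 < 0 := fun x =>
      lt_of_le_of_ne (not_lt.1 fun h => h0 (hsign x 0 h)) (hne x)
    obtain ⟨A, b, c, hA, h⟩ := j_pos (fun y => - u y) hu.neg
      (fun x => by rw [j_neg, Matrix.det_neg, hMA]; simp)
      (fun x => by rw [j_neg, Matrix.neg_apply]; linarith [hneg x])
    refine ⟨-A, -b, -c, hA.neg, fun x => ?_⟩
    have := h x
    simp [Fin.sum_univ_two] at this ⊢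
    linarith
end

section
/- (Bernstein's theorem) Let u : ℝ² → ℝ be a smooth function solving the minimal surface equation on all of ℝ². Then u is affine, i.e. there exist b ∈ ℝ² and c ∈ ℝ with u(x) = ⟨b, x⟩ + c for all x ∈ ℝ². -/
open Real

/-- First partial derivative of `u` at `x` in direction `i`. -/
noncomputable def partialDeriv' {n : ℕ} (u : EuclideanSpace ℝ (Fin n) → ℝ) (i : Fin n)
    (x : EuclideanSpace ℝ (Fin n)) : ℝ :=
  fderiv ℝ u x (EuclideanSpace.single i 1)

noncomputable def bnLin (a b : ℝ) : ℂ →L[ℝ] ℝ := a • Complex.reCLM + b • Complex.imCLM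

theorem bnLin_apply (a b : ℝ) (v : ℂ) : bnLin a b v = a * v.re + b * v.im := by
  simp [bnLin]

theorem bn_norm_le (h g : ℂ) (H : 0 ≤ h.re * g.re + h.im * g.im) : ‖h‖ ≤ ‖h + g‖ := by
  apply le_of_sq_le_sq _ (norm_nonneg _)
  rw [Complex.sq_norm, Complex.sq_norm, Complex.normSq_apply, Complex.normSq_apply]
  simp only [Complex.add_re, Complex.add_im]
  nlinarith [sq_nonneg g.re, sq_nonneg g.im]

theorem bn_norm_sub_le (h g : ℂ) (H : 0 ≤ h.re * g.re + h.im * g.im) : ‖h - g‖ ≤ ‖h + g‖ := by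
  apply le_of_sq_le_sq _ (norm_nonneg _)
  rw [Complex.sq_norm, Complex.sq_norm, Complex.normSq_apply, Complex.normSq_apply]
  simp only [Complex.add_re, Complex.add_im, Complex.sub_re, Complex.sub_im]
  nlinarith

theorem bn_quad (r s t a b : ℝ) (hr : 0 < r) (hd : r * t - s ^ 2 = 1) :
    0 ≤ a * (r * a + s * b) + b * (s * a + t * b) := by
  have : 0 ≤ r * (a * (r * a + s * b) + b * (s * a + t * b)) := by
    have : r * (a * (r * a + s * b) + b * (s * a + t * b)) = (r * a + s * b) ^ 2 + b ^ 2 := by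
      linear_combination b ^ 2 * hd
    rw [this]; positivity
  exact nonneg_of_mul_nonneg_right this hr

theorem bn_mono (r s t A B : ℂ → ℝ) (hr : ∀ z, 0 < r z) (hd : ∀ z, r z * t z - s z ^ 2 = 1)
    (hA : ∀ z, HasFDerivAt A (bnLin (r z) (s z)) z)
    (hB : ∀ z, HasFDerivAt B (bnLin (s z) (t z)) z) (x h : ℂ) :
    0 ≤ h.re * (A (x + h) - A x) + h.im * (B (x + h) - B x) := by
  have hl : ∀ τ : ℝ, HasDerivAt (fun τ : ℝ => x + (τ : ℂ) * h) h τ := by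
    intro τ
    simpa using ((Complex.ofRealCLM.hasDerivAt (x := τ)).mul_const h).const_add x
  have hg : ∀ τ : ℝ, HasDerivAt
      (fun τ : ℝ => h.re * A (x + (τ : ℂ) * h) + h.im * B (x + (τ : ℂ) * h))
      (h.re * bnLin (r (x + (τ : ℂ) * h)) (s (x + (τ : ℂ) * h)) h
        + h.im * bnLin (s (x + (τ : ℂ) * h)) (t (x + (τ : ℂ) * h)) h) τ := by
    intro τ
    exact (((hA _).comp_hasDerivAt τ (hl τ)).const_mul h.re).add
      (((hB _).comp_hasDerivAt τ (hl τ)).const_mul h.im)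
  have hm := monotone_of_deriv_nonneg (fun τ => (hg τ).differentiableAt) (by
    intro τ
    rw [(hg τ).deriv, bnLin_apply, bnLin_apply]
    exact bn_quad _ _ _ _ _ (hr _) (hd _))
  have := hm zero_le_one
  simp at this
  linarith

theorem bn_jorgens (r s t A B : ℂ → ℝ) (hrc : Continuous r) (hsc : Continuous s)
    (htc : Continuous t) (hr : ∀ z, 0 < r z) (ht : ∀ z, 0 < t z)
    (hd : ∀ z, r z * t z - s z ^ 2 = 1)
    (hA : ∀ z, HasFDerivAt A (bnLin (r z) (s z)) z)
    (hB : ∀ z, HasFDerivAt B (bnLin (s z) (t z)) z) (z w : ℂ) :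
    r z = r w ∧ s z = s w ∧ t z = t w := by
  let G : ℂ → ℂ := fun z => (A z : ℂ) + (B z : ℂ) * Complex.I
  let M : ℂ → ℂ →L[ℝ] ℂ := fun z => Complex.ofRealCLM ∘L bnLin (r z) (s z)
    + Complex.I • (Complex.ofRealCLM ∘L bnLin (s z) (t z))
  have hMre : ∀ z v, (M z v).re = r z * v.re + s z * v.im := by
    intro z v; simp [M, bnLin_apply]
  have hMim : ∀ z v, (M z v).im = s z * v.re + t z * v.im := by
    intro z v; simp [M, bnLin_apply]
  have hG : ∀ z, HasFDerivAt G (M z) z := by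
    intro z
    have h1 := (Complex.ofRealCLM.hasFDerivAt (x := A z)).comp z (hA z)
    have h2 := ((Complex.ofRealCLM.hasFDerivAt (x := B z)).comp z (hB z)).const_smul Complex.I
    refine (h1.add h2).congr_of_eventuallyEq (Filter.Eventually.of_forall fun y => ?_)
    simp [G, mul_comm]
  have hMc : Continuous M := by
    unfold M bnLin
    fun_prop
  let F : ℂ → ℂ := fun z => z + G z
  have hinj : ∀ z, Function.Injective (ContinuousLinearMap.id ℝ ℂ + M z) := by
    intro z
    rw [injective_iff_map_eq_zero]
    intro v hv
    have h1 := bn_norm_le v (M z v) (by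
      rw [hMre, hMim]; exact bn_quad _ _ _ _ _ (hr _) (hd _))
    have h2 : v + M z v = 0 := hv
    rw [h2, norm_zero] at h1
    exact norm_le_zero_iff.1 h1
  let e : ℂ → ℂ ≃L[ℝ] ℂ := fun z =>
    (LinearEquiv.ofInjectiveEndo (ContinuousLinearMap.id ℝ ℂ + M z : ℂ →L[ℝ] ℂ).toLinearMap
      (hinj z)).toContinuousLinearEquiv
  have he : ∀ z, (e z : ℂ →L[ℝ] ℂ) = ContinuousLinearMap.id ℝ ℂ + M z := by
    intro z; ext v; simp [e]
  have hF : ∀ z, HasFDerivAt F (ContinuousLinearMap.id ℝ ℂ + M z) z := fun z =>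
    (hasFDerivAt_id z).add (hG z)
  have hFs : ∀ z, HasStrictFDerivAt F (e z : ℂ →L[ℝ] ℂ) z := by
    intro z
    rw [he]
    exact hasStrictFDerivAt_of_hasFDerivAt_of_continuousAt (Filter.Eventually.of_forall hF)
      (continuous_const.add hMc).continuousAt
  have hmono : ∀ x y, 0 ≤ (x - y).re * (G x - G y).re + (x - y).im * (G x - G y).im := by
    intro x y
    have := bn_mono r s t A B hr hd hA hB y (x - y)
    simpa [G] using this
  have hanti : AntilipschitzWith 1 F := by
    apply AntilipschitzWith.of_le_mul_dist
    intro x y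
    have := bn_norm_le _ _ (hmono x y)
    rw [dist_eq_norm, dist_eq_norm]
    have h2 : F x - F y = x - y + (G x - G y) := by simp only [F]; ring
    rw [h2]; simpa using this
  have hFc : Continuous F := continuous_iff_continuousAt.2 fun z => (hF z).continuousAt
  have hopen : IsOpenMap F := isOpenMap_of_hasStrictFDerivAt_equiv hFs
  have hclosed : IsClosed (Set.range F) := by
    have hp : IsProperMap F := by
      rw [isProperMap_iff_tendsto_cocompact]
      refine ⟨hFc, ?_⟩
      rw [← Metric.cobounded_eq_cocompact]
      exact hanti.tendsto_cobounded
    exact hp.isClosedMap.isClosed_range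
  have hsurj : Function.Surjective F := by
    rw [← Set.range_eq_univ]
    exact IsClopen.eq_univ ⟨hclosed, hopen.isOpen_range⟩ (Set.range_nonempty F)
  let Fi : ℂ → ℂ := Function.surjInv hsurj
  have hFi : ∀ w, F (Fi w) = w := Function.surjInv_eq hsurj
  have hiF : ∀ z, Fi (F z) = z := fun z => hanti.injective (hFi _)
  have hFil : LipschitzWith 1 Fi := hanti.to_rightInverse hFi
  have hFid : ∀ z, HasFDerivAt Fi ((e z).symm : ℂ →L[ℝ] ℂ) (F z) := by
    intro z
    refine HasFDerivAt.of_local_left_inverse (f := F) hFil.continuous.continuousAt ?_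
      (Filter.Eventually.of_forall hFi)
    rw [hiF]; exact (hFs z).hasFDerivAt
  let H : ℂ → ℂ := fun w => (starRingEnd ℂ) (Fi w - G (Fi w))
  let c : ℂ → ℂ := fun z => ((t z - r z : ℝ) + (2 * s z : ℝ) * Complex.I) / ((2 + r z + t z : ℝ) : ℂ)
  have hc : ∀ z v, (starRingEnd ℂ) (v - M z v) = c z * (v + M z v) := by
    intro z v
    have hne : ((2 + r z + t z : ℝ) : ℂ) ≠ 0 := by
      have := hr z; have := ht z
      exact_mod_cast (by positivity : (2 + r z + t z : ℝ) ≠ 0)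
    simp only [c]
    rw [div_mul_eq_mul_div, eq_div_iff hne]
    have := hd z
    apply Complex.ext
    · simp [hMre, hMim, -Complex.ofReal_add, -Complex.ofReal_sub, -Complex.ofReal_mul]
      linear_combination (-2 * v.re) * this
    · simp [hMre, hMim, -Complex.ofReal_add, -Complex.ofReal_sub, -Complex.ofReal_mul]
      linear_combination (2 * v.im) * this
  have hH : ∀ z, HasDerivAt H (c z) (F z) := by
    intro z
    have h1 : HasFDerivAt (fun x => (starRingEnd ℂ) (x - G x))
        ((Complex.conjCLE : ℂ →L[ℝ] ℂ) ∘L (ContinuousLinearMap.id ℝ ℂ - M z)) (Fi (F z)) := by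
      rw [hiF]
      exact ((Complex.conjCLE : ℂ →L[ℝ] ℂ).hasFDerivAt).comp z ((hasFDerivAt_id z).sub (hG z))
    have h2 := h1.comp (F z) (hFid z)
    rw [hasDerivAt_iff_hasFDerivAt]
    refine hasFDerivAt_of_restrictScalars ℝ h2 ?_
    refine ContinuousLinearMap.ext fun w => ?_
    have h3 := hc z ((e z).symm w)
    have h4 : (e z).symm w + M z ((e z).symm w) = w := by
      have : (e z : ℂ →L[ℝ] ℂ) ((e z).symm w) = w := (e z).apply_symm_apply w
      rw [he] at this
      exact this
    rw [h4] at h3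
    simp only [ContinuousLinearMap.coe_restrictScalars', ContinuousLinearMap.toSpanSingleton_apply,
      smul_eq_mul]
    rw [mul_comm, ← h3]
    simp
  have hHd : Differentiable ℂ H := by
    intro w
    rw [← hFi w]
    exact (hH _).differentiableAt
  have hHl : LipschitzWith 1 H := by
    apply LipschitzWith.of_dist_le_mul
    intro x y
    have := bn_norm_sub_le _ _ (hmono (Fi x) (Fi y))
    rw [dist_eq_norm, dist_eq_norm]
    have h2 : x - y = Fi x - Fi y + (G (Fi x) - G (Fi y)) := by
      conv_lhs => rw [← hFi x, ← hFi y]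
      simp only [F]; ring
    have h3 : H x - H y = (starRingEnd ℂ) (Fi x - Fi y - (G (Fi x) - G (Fi y))) := by
      simp only [H, ← map_sub]; congr 1; ring
    rw [h3, Complex.norm_conj]
    simp only [NNReal.coe_one, one_mul]
    conv_rhs => rw [h2]
    exact this
  have hbd : Bornology.IsBounded (Set.range (deriv H)) := by
    rw [isBounded_iff_forall_norm_le]
    refine ⟨1, ?_⟩
    rintro _ ⟨x, rfl⟩
    simpa using norm_deriv_le_of_lipschitz hHl (x₀ := x)
  have hcc : c z = c w := by
    rw [← (hH z).deriv, ← (hH w).deriv]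
    exact hHd.deriv.apply_eq_apply_of_bounded hbd _ _
  have hz1 := hr z
  have hz2 := ht z
  have hw1 := hr w
  have hw2 := ht w
  have pz : 0 < 2 + r z + t z := by positivity
  have pw : 0 < 2 + r w + t w := by positivity
  have e1 : (t z - r z) / (2 + r z + t z) = (t w - r w) / (2 + r w + t w) := by
    have := congrArg Complex.re hcc
    simpa [c, -Complex.ofReal_add, -Complex.ofReal_sub, -Complex.ofReal_mul, Complex.div_ofReal_re] using this
  have e2 : 2 * s z / (2 + r z + t z) = 2 * s w / (2 + r w + t w) := by
    have := congrArg Complex.im hcc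
    simpa [c, -Complex.ofReal_add, -Complex.ofReal_sub, -Complex.ofReal_mul, Complex.div_ofReal_im] using this
  have key : ∀ z, 0 < 2 + r z + t z → ((t z - r z) / (2 + r z + t z)) ^ 2 + (2 * s z / (2 + r z + t z)) ^ 2
      = 1 - 4 / (2 + r z + t z) := by
    intro z hz
    field_simp
    linear_combination (-4) * hd z
  have hT : 2 + r z + t z = 2 + r w + t w := by
    have h1 := key z pz
    rw [e1, e2, key w pw] at h1
    field_simp at h1
    linarith
  rw [hT] at e1 e2
  have e1' := (div_left_inj' pw.ne').1 e1
  have e2' := (div_left_inj' pw.ne').1 e2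
  refine ⟨by linarith, by linarith, by linarith⟩

theorem bn_closed (a b : ℂ → ℝ) (ax ay bx by' : ℂ → ℝ)
    (ha : ∀ z, HasFDerivAt a (bnLin (ax z) (ay z)) z)
    (hb : ∀ z, HasFDerivAt b (bnLin (bx z) (by' z)) z) (h : ∀ z, ay z = bx z) :
    ∃ f : ℂ → ℝ, ∀ z, HasFDerivAt f (bnLin (a z) (b z)) z := by
  have hω : ∀ z, HasFDerivAt (fun z => bnLin (a z) (b z))
      ((bnLin (ax z) (ay z)).smulRight Complex.reCLM
        + (bnLin (bx z) (by' z)).smulRight Complex.imCLM) z := by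
    intro z
    exact ((ha z).smul_const Complex.reCLM).add ((hb z).smul_const Complex.imCLM)
  obtain ⟨f, hf⟩ := Convex.exists_forall_hasFDerivAt_of_fderiv_symmetric (s := Set.univ)
    (ω := fun z => bnLin (a z) (b z)) convex_univ isOpen_univ
    (fun z _ => (hω z).differentiableAt.differentiableWithinAt) (by
      intro z _ x y
      rw [(hω z).fderiv]
      simp [bnLin_apply, h]
      ring)
  exact ⟨f, fun z => hf z trivial⟩

theorem bn_sq_const (P : ℂ → ℝ) (hP : Continuous P) (h : ∀ z, P z ^ 2 = P 0 ^ 2) (z : ℂ) :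
    P z = P 0 := by
  by_cases h0 : P 0 = 0
  · have := h z
    rw [h0] at this ⊢
    simpa using this
  · exact isPreconnected_univ.eq_of_sq_eq hP.continuousOn continuousOn_const
      (fun z _ => h z) (fun _ => h0) (Set.mem_univ 0) rfl (Set.mem_univ z)

theorem bn_core (P Q a b c : ℂ → ℝ)
    (hP : ∀ z, HasFDerivAt P (bnLin (a z) (b z)) z)
    (hQ : ∀ z, HasFDerivAt Q (bnLin (b z) (c z)) z)
    (hm : ∀ z, (1 + Q z ^ 2) * a z - 2 * P z * Q z * b z + (1 + P z ^ 2) * c z = 0) (z : ℂ) :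
    P z = P 0 ∧ Q z = Q 0 := by
  have hPc : Continuous P := continuous_iff_continuousAt.2 fun z => (hP z).continuousAt
  have hQc : Continuous Q := continuous_iff_continuousAt.2 fun z => (hQ z).continuousAt
  let V : ℂ → ℝ := fun z => 1 + P z ^ 2 + Q z ^ 2
  let W : ℂ → ℝ := fun z => √(V z)
  have hV : ∀ z, 0 < V z := fun z => by simp only [V]; positivity
  have hW : ∀ z, 0 < W z := fun z => Real.sqrt_pos.2 (hV z)
  have hWs : ∀ z, W z ^ 2 = 1 + P z ^ 2 + Q z ^ 2 := fun z => Real.sq_sqrt (hV z).le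
  have hWc : Continuous W := by simp only [W, V]; fun_prop
  have hWd : ∀ z, HasFDerivAt W (bnLin ((P z * a z + Q z * b z) / W z)
      ((P z * b z + Q z * c z) / W z)) z := by
    intro z
    have := (((((hP z).pow 2).const_add 1).add ((hQ z).pow 2)).sqrt (hV z).ne')
    refine this.congr_fderiv ?_
    have hw := (hW z).ne'
    refine ContinuousLinearMap.ext fun v => ?_
    simp [bnLin_apply]
    change (W z)⁻¹ * 2⁻¹ * _ + (W z)⁻¹ * 2⁻¹ * _ = _
    field_simp
    ring
  -- quotient rule
  have quot : ∀ (f : ℂ → ℝ) (fx fy : ℝ) (z : ℂ), HasFDerivAt f (bnLin fx fy) z →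
      HasFDerivAt (fun z => f z / W z)
        (bnLin ((fx * W z ^ 2 - f z * (P z * a z + Q z * b z)) / W z ^ 3)
          ((fy * W z ^ 2 - f z * (P z * b z + Q z * c z)) / W z ^ 3)) z := by
    intro f fx fy z hf
    have hw := (hW z).ne'
    have := hf.mul ((hasDerivAt_inv hw).comp_hasFDerivAt z (hWd z))
    simp only [div_eq_mul_inv]
    refine this.congr_fderiv ?_
    refine ContinuousLinearMap.ext fun v => ?_
    simp [bnLin_apply]
    field_simp
    ring
  have hr := fun z => quot (fun z => 1 + P z ^ 2) (2 * P z * a z) (2 * P z * b z) z (by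
    refine (((hP z).pow 2).const_add 1).congr_fderiv ?_
    refine ContinuousLinearMap.ext fun v => ?_
    simp [bnLin_apply]; ring)
  have ht := fun z => quot (fun z => 1 + Q z ^ 2) (2 * Q z * b z) (2 * Q z * c z) z (by
    refine (((hQ z).pow 2).const_add 1).congr_fderiv ?_
    refine ContinuousLinearMap.ext fun v => ?_
    simp [bnLin_apply]; ring)
  have hs := fun z => quot (fun z => P z * Q z) (P z * b z + Q z * a z) (P z * c z + Q z * b z) z (by
    refine ((hP z).mul (hQ z)).congr_fderiv ?_
    refine ContinuousLinearMap.ext fun v => ?_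
    simp [bnLin_apply]; ring)
  obtain ⟨A, hA⟩ := bn_closed _ _ _ _ _ _ hr hs (by
    intro z
    congr 1
    rw [hWs]
    linear_combination (-Q z) * hm z)
  obtain ⟨B, hB⟩ := bn_closed _ _ _ _ _ _ hs ht (by
    intro z
    congr 1
    rw [hWs]
    linear_combination (P z) * hm z)
  have hj := bn_jorgens _ _ _ A B
    (by fun_prop (disch := intro z; exact (hW z).ne'))
    (by fun_prop (disch := intro z; exact (hW z).ne'))
    (by fun_prop (disch := intro z; exact (hW z).ne'))
    (fun z => div_pos (by positivity) (hW z)) (fun z => div_pos (by positivity) (hW z))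
    (by
      intro z
      have hw := (hW z).ne'
      field_simp
      rw [hWs]; ring) hA hB
  have hW1 : ∀ z, 1 ≤ W z := by
    intro z
    rw [← Real.sqrt_one]
    apply Real.sqrt_le_sqrt
    simp only [V]; nlinarith [sq_nonneg (P z), sq_nonneg (Q z)]
  have hWeq : ∀ z, W z = W 0 := by
    intro z
    obtain ⟨h1, -, h3⟩ := hj z 0
    have h4 : (1 + W z ^ 2) / W z = (1 + W 0 ^ 2) / W 0 := by
      rw [hWs, hWs]
      have := congrArg₂ (· + ·) h1 h3
      simp only [← add_div] at this
      convert this using 2 <;> ring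
    rw [div_eq_div_iff (hW z).ne' (hW 0).ne'] at h4
    have h5 : (W z - W 0) * (W z * W 0 - 1) = 0 := by linear_combination h4
    rcases mul_eq_zero.1 h5 with h | h
    · linarith
    · have := hW1 z; have := hW1 0
      nlinarith
  constructor
  · apply bn_sq_const P hPc
    intro z
    have h1 := (hj z 0).1
    rw [hWeq z] at h1
    have := (div_left_inj' (hW 0).ne').1 h1
    linarith
  · apply bn_sq_const Q hQc
    intro z
    have h1 := (hj z 0).2.2
    rw [hWeq z] at h1
    have := (div_left_inj' (hW 0).ne').1 h1
    linarith

/-- Bernstein's theorem: entire solutions of the minimal surface equation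
`(1+|∇u|²)Δu − ∑ᵢⱼ uᵢ uⱼ uᵢⱼ = 0` on ℝ² are affine. -/
theorem bernstein_mse (u : EuclideanSpace ℝ (Fin 2) → ℝ)
    (hu : ContDiff ℝ (⊤ : ℕ∞) u)
    (hMSE : ∀ x, (1 + ∑ i, (partialDeriv' u i x) ^ 2) * (∑ i, hessianMatrix u x i i)
      - ∑ i, ∑ j, partialDeriv' u i x * partialDeriv' u j x * hessianMatrix u x i j = 0) :
    ∃ (b : Fin 2 → ℝ) (c : ℝ), ∀ x, u x = (∑ i, b i * x i) + c := by
  let L : ℂ →L[ℝ] EuclideanSpace ℝ (Fin 2) :=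
    Complex.reCLM.smulRight (EuclideanSpace.single 0 1)
      + Complex.imCLM.smulRight (EuclideanSpace.single 1 1)
  have hL : ∀ v, L v = v.re • EuclideanSpace.single 0 1 + v.im • EuclideanSpace.single 1 1 := by
    intro v; simp [L]
  have hLx : ∀ x : EuclideanSpace ℝ (Fin 2), L ⟨x 0, x 1⟩ = x := by
    intro x
    rw [hL]
    ext i
    fin_cases i <;> simp
  have hu1 : ContDiff ℝ (⊤ : ℕ∞) (fderiv ℝ u) := hu.fderiv_right (by simp)
  have hdp : ∀ i, Differentiable ℝ (partialDeriv' u i) := by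
    intro i
    have h : ContDiff ℝ (⊤ : ℕ∞) (partialDeriv' u i) := hu1.clm_apply contDiff_const
    exact h.differentiable (by simp)
  have hh : ∀ x i j, hessianMatrix u x i j = fderiv ℝ (partialDeriv' u j) x
      (EuclideanSpace.single i 1) := fun x i j => rfl
  have hsym : ∀ x, hessianMatrix u x 0 1 = hessianMatrix u x 1 0 := by
    intro x
    have h1 : ∀ i j, hessianMatrix u x i j = fderiv ℝ (fderiv ℝ u) x
        (EuclideanSpace.single i 1) (EuclideanSpace.single j 1) := by
      intro i j
      have hd : DifferentiableAt ℝ (fderiv ℝ u) x := hu1.differentiable (by simp) x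
      have := hd.hasFDerivAt.clm_apply (hasFDerivAt_const (EuclideanSpace.single j (1 : ℝ)) x)
      rw [hh]
      unfold partialDeriv'
      rw [this.fderiv]
      simp
    rw [h1, h1]
    exact second_derivative_symmetric (fun y => (hu.differentiable (by simp) y).hasFDerivAt)
      (hu1.differentiable (by simp) x).hasFDerivAt _ _
  have hder : ∀ i z, HasFDerivAt (fun z => partialDeriv' u i (L z))
      (bnLin (hessianMatrix u (L z) 0 i) (hessianMatrix u (L z) 1 i)) z := by
    intro i z
    refine ((hdp i (L z)).hasFDerivAt.comp z L.hasFDerivAt).congr_fderiv ?_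
    refine ContinuousLinearMap.ext fun v => ?_
    rw [bnLin_apply, hh, hh, ContinuousLinearMap.comp_apply, hL v, map_add, map_smul, map_smul]
    simp [mul_comm]
  have hc := bn_core (fun z => partialDeriv' u 0 (L z)) (fun z => partialDeriv' u 1 (L z))
    (fun z => hessianMatrix u (L z) 0 0) (fun z => hessianMatrix u (L z) 1 0)
    (fun z => hessianMatrix u (L z) 1 1) (hder 0)
    (by intro z; have := hder 1 z; rw [hsym] at this; exact this)
    (by
      intro z
      have := hMSE (L z)
      simp only [Fin.sum_univ_two, hsym] at this
      linear_combination this)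
  have hconst : ∀ i x, partialDeriv' u i x = partialDeriv' u i 0 := by
    intro i x
    have := hc ⟨x 0, x 1⟩
    simp only [hLx, map_zero] at this
    fin_cases i
    · exact this.1
    · exact this.2
  have hfd : ∀ x, fderiv ℝ u x = fderiv ℝ u 0 := by
    intro x
    refine ContinuousLinearMap.ext fun v => ?_
    rw [← hLx v, hL, map_add, map_add, map_smul, map_smul, map_smul, map_smul]
    have h0 := hconst 0 x
    have h1 := hconst 1 x
    unfold partialDeriv' at h0 h1
    rw [h0, h1]
  have hz : ∀ x, u x - fderiv ℝ u 0 x = u 0 := by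
    intro x
    have hd : ∀ y, HasFDerivAt (fun y => u y - fderiv ℝ u 0 y) (0 : _ →L[ℝ] ℝ) y := by
      intro y
      have := (hu.differentiable (by simp) y).hasFDerivAt.sub (fderiv ℝ u 0).hasFDerivAt
      rwa [hfd y, sub_self] at this
    have := is_const_of_fderiv_eq_zero (fun y => (hd y).differentiableAt)
      (fun y => (hd y).fderiv) x 0
    simpa using this
  refine ⟨fun i => partialDeriv' u i 0, u 0, fun x => ?_⟩
  have h1 := hz x
  have h2 : fderiv ℝ u 0 x = x 0 * partialDeriv' u 0 0 + x 1 * partialDeriv' u 1 0 := by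
    conv_lhs => rw [← hLx x]
    rw [hL, map_add, map_smul, map_smul]
    rfl
  rw [Fin.sum_univ_two]
  linarith
end

section
/- Let u : ℝ² → ℝ be a smooth function and let μ ≠ 0 be a real constant such that arctan λ₁(x) + arctan λ₂(x) = μ for every x ∈ ℝ², where λ₁(x), λ₂(x) are the eigenvalues of D²u(x). Then u is a quadratic polynomial. -/
open Real

theorem sl_core (f : ℂ → ℂ) (L : ℂ → ℂ →L[ℝ] ℂ) (A B C : ℂ → ℝ) (k : ℝ) (hk : 0 < k)
    (hL : ∀ z h, L z h = ⟨A z * h.re + B z * h.im, B z * h.re + C z * h.im⟩)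
    (hf : ∀ z, HasStrictFDerivAt f (L z) z)
    (hdet : ∀ z, A z * C z - B z ^ 2 = k ^ 2) (hA : ∀ z, 0 < A z) :
    ∀ z w, A z = A w ∧ B z = B w ∧ C z = C w := by
  have hquad : ∀ z (a b : ℝ), 0 ≤ A z * a ^ 2 + 2 * B z * a * b + C z * b ^ 2 := by
    intro z a b
    have h1 : 0 ≤ A z * (A z * a ^ 2 + 2 * B z * a * b + C z * b ^ 2) := by
      have : A z * (A z * a ^ 2 + 2 * B z * a * b + C z * b ^ 2)
        = (A z * a + B z * b) ^ 2 + (A z * C z - B z ^ 2) * b ^ 2 := by ring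
      rw [this, hdet]; positivity
    exact nonneg_of_mul_nonneg_right h1 (hA z)
  have hmono : ∀ z w, 0 ≤ (z - w).re * (f z - f w).re + (z - w).im * (f z - f w).im := by
    intro z w
    set d := z - w with hd
    let φ : ℝ → ℝ := fun t => d.re * (f (w + t * d)).re + d.im * (f (w + t * d)).im
    have hφ : ∀ t : ℝ, HasDerivAt φ (d.re * (L (w + t * d) d).re + d.im * (L (w + t * d) d).im) t := by
      intro t
      have h1 : HasDerivAt (fun t : ℝ => w + (t : ℂ) * d) d t := by
        have := ((Complex.ofRealCLM.hasDerivAt (x := t)).mul_const d).const_add w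
        simpa using this
      have h2 := (hf (w + t * d)).hasFDerivAt.comp_hasDerivAt t h1
      have h3 := (Complex.reCLM.hasFDerivAt (x := f (w + t * d))).comp_hasDerivAt t h2
      have h4 := (Complex.imCLM.hasFDerivAt (x := f (w + t * d))).comp_hasDerivAt t h2
      exact (h3.const_mul d.re).add (h4.const_mul d.im)
    have hm : Monotone φ := monotone_of_hasDerivAt_nonneg hφ (by
      intro t
      have := hquad (w + t * d) d.re d.im
      simp only [hL, Pi.zero_apply]
      nlinarith)
    have h01 := hm (zero_le_one (α := ℝ))
    have e1 : w + ((1 : ℝ) : ℂ) * d = z := by simp [hd]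
    have e0 : w + ((0 : ℝ) : ℂ) * d = w := by simp
    simp only [φ, e1, e0] at h01
    simp only [Complex.sub_re, Complex.sub_im]
    linarith
  let F : ℂ → ℂ := fun z => (k : ℂ) * z + f z
  let W : ℂ → ℂ := fun z => (starRingEnd ℂ) ((k : ℂ) * z - f z)
  let DF : ℂ → ℂ →L[ℝ] ℂ := fun z => k • ContinuousLinearMap.id ℝ ℂ + L z
  let DW : ℂ → ℂ →L[ℝ] ℂ := fun z => (Complex.conjCLE : ℂ →L[ℝ] ℂ).comp (k • ContinuousLinearMap.id ℝ ℂ - L z)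
  have hDF : ∀ z h, DF z h = ⟨k * h.re + (A z * h.re + B z * h.im), k * h.im + (B z * h.re + C z * h.im)⟩ := by
    intro z h
    apply Complex.ext <;> simp [DF, hL]
  have hDW : ∀ z h, DW z h = ⟨k * h.re - (A z * h.re + B z * h.im), -(k * h.im - (B z * h.re + C z * h.im))⟩ := by
    intro z h
    apply Complex.ext <;> simp [DW, hL]
    ring
  have hlin : ∀ z, HasStrictFDerivAt (fun z : ℂ => (k : ℂ) * z) (k • ContinuousLinearMap.id ℝ ℂ) z := by
    intro z
    have := (k • ContinuousLinearMap.id ℝ ℂ).hasStrictFDerivAt (x := z)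
    refine this.congr_of_eventuallyEq (Filter.Eventually.of_forall fun y => ?_)
    simp
  have hF' : ∀ z, HasStrictFDerivAt F (DF z) z := fun z => (hlin z).add (hf z)
  have hW' : ∀ z, HasStrictFDerivAt W (DW z) z := fun z =>
    ((Complex.conjCLE : ℂ →L[ℝ] ℂ).hasStrictFDerivAt).comp z ((hlin z).sub (hf z))
  have hinj : ∀ z, Function.Injective (DF z) := by
    intro z
    rw [injective_iff_map_eq_zero]
    intro h h0
    rw [hDF] at h0
    have e1 := congrArg Complex.re h0
    have e2 := congrArg Complex.im h0
    simp only [Complex.zero_re, Complex.zero_im] at e1 e2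
    have := hquad z h.re h.im
    have h3 : k * (h.re ^ 2 + h.im ^ 2) ≤ 0 := by
      have : h.re * (k * h.re + (A z * h.re + B z * h.im)) + h.im * (k * h.im + (B z * h.re + C z * h.im)) = 0 := by
        rw [e1, e2]; ring
      nlinarith
    have h4 : h.re ^ 2 + h.im ^ 2 ≤ 0 := by
      by_contra hc
      push Not at hc
      nlinarith [mul_pos hk hc]
    apply Complex.ext <;> simp <;> nlinarith [sq_nonneg h.re, sq_nonneg h.im]
  let E : ∀ z, ℂ ≃L[ℝ] ℂ := fun z =>
    (LinearEquiv.ofInjectiveEndo (DF z : ℂ →ₗ[ℝ] ℂ) (hinj z)).toContinuousLinearEquiv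
  have hE : ∀ z, ((E z : ℂ ≃L[ℝ] ℂ) : ℂ →L[ℝ] ℂ) = DF z := by
    intro z; ext h <;> rfl
  have hFE : ∀ z, HasStrictFDerivAt F ((E z : ℂ ≃L[ℝ] ℂ) : ℂ →L[ℝ] ℂ) z := by
    intro z; rw [hE]; exact hF' z
  have hexp : ∀ z w, k * ‖z - w‖ ≤ ‖F z - F w‖ := by
    intro z w
    have hm := hmono z w
    refine (abs_le_of_sq_le_sq' ?_ (norm_nonneg _)).2
    rw [mul_pow, Complex.sq_norm, Complex.sq_norm, Complex.normSq_apply, Complex.normSq_apply]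
    simp only [F, Complex.sub_re, Complex.sub_im, Complex.add_re, Complex.add_im, Complex.re_ofReal_mul, Complex.im_ofReal_mul] at hm ⊢
    nlinarith [mul_nonneg hk.le hm, sq_nonneg ((f z).re - (f w).re), sq_nonneg ((f z).im - (f w).im)]
  have hlip : ∀ z w, ‖W z - W w‖ ≤ ‖F z - F w‖ := by
    intro z w
    have hm := hmono z w
    refine (abs_le_of_sq_le_sq' ?_ (norm_nonneg _)).2
    rw [Complex.sq_norm, Complex.sq_norm, Complex.normSq_apply, Complex.normSq_apply]
    simp only [F, W, Complex.sub_re, Complex.sub_im, Complex.add_re, Complex.add_im, Complex.re_ofReal_mul, Complex.im_ofReal_mul, Complex.conj_re, Complex.conj_im] at hm ⊢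
    nlinarith [mul_nonneg hk.le hm]
  have hanti : AntilipschitzWith (Real.toNNReal k⁻¹) F := by
    apply AntilipschitzWith.of_le_mul_dist
    intro z w
    rw [dist_eq_norm, dist_eq_norm, Real.coe_toNNReal _ (by positivity)]
    have := hexp z w
    rw [inv_mul_eq_div, le_div_iff₀ hk]; linarith
  have hcont : Continuous F := continuous_iff_continuousAt.2 fun z => (hF' z).continuousAt
  have hopen : IsOpenMap F := isOpenMap_iff_nhds_le.2 fun z =>
    ((hFE z).map_nhds_eq_of_equiv).ge
  have hprop : IsProperMap F := by
    rw [isProperMap_iff_tendsto_cocompact]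
    refine ⟨hcont, ?_⟩
    rw [← Metric.cobounded_eq_cocompact]
    exact hanti.tendsto_cobounded
  have hsurj : Function.Surjective F := by
    rw [← Set.range_eq_univ]
    exact IsClopen.eq_univ ⟨hprop.isClosedMap.isClosed_range, hopen.isOpen_range⟩ (Set.range_nonempty F)
  obtain ⟨g, hg⟩ := hsurj.hasRightInverse
  have hgc : Continuous g := (hanti.to_rightInverse hg).continuous
  let a : ℂ → ℂ := fun z => DW z 1 / DF z 1
  have ha : ∀ z h, DW z h = a z * DF z h := by
    intro z h
    have hne : DF z 1 ≠ 0 := by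
      intro h0
      have := hinj z (h0.trans (map_zero _).symm)
      exact one_ne_zero this
    simp only [a]
    rw [div_mul_eq_mul_div, eq_div_iff hne]
    have := hdet z
    simp only [hDF, hDW]
    apply Complex.ext <;> simp
    · ring
    · linear_combination 2 * h.im * this
  have hG : ∀ y, HasDerivAt (W ∘ g) (a (g y)) y := by
    intro y
    have h1 : HasFDerivAt g ((E (g y)).symm : ℂ →L[ℝ] ℂ) y :=
      HasFDerivAt.of_local_left_inverse hgc.continuousAt (hFE (g y)).hasFDerivAt
        (Filter.Eventually.of_forall hg)
    have h2 := (hW' (g y)).hasFDerivAt.comp y h1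
    rw [hasDerivAt_iff_hasFDerivAt]
    refine hasFDerivAt_of_restrictScalars ℝ h2 ?_
    ext1 h
    have h3 := ha (g y) ((E (g y)).symm h)
    rw [← hE, ContinuousLinearEquiv.coe_coe, ContinuousLinearEquiv.apply_symm_apply] at h3
    simp [h3, mul_comm]
  have hd : Differentiable ℂ (W ∘ g) := fun y => (hG y).differentiableAt
  have hGl : LipschitzWith 1 (W ∘ g) := by
    apply LipschitzWith.of_dist_le_mul
    intro x y
    have := hlip (g x) (g y)
    rw [hg, hg] at this
    simpa [dist_eq_norm] using this
  have hd2 : Differentiable ℂ (deriv (W ∘ g)) :=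
    (hd.contDiff (n := 2)).differentiable_deriv_two
  have hbd : Bornology.IsBounded (Set.range (deriv (W ∘ g))) := by
    rw [isBounded_iff_forall_norm_le]
    refine ⟨1, ?_⟩
    rintro _ ⟨y, rfl⟩
    simpa using norm_deriv_le_of_lipschitz hGl (x₀ := y)
  have hac : ∀ z w, a z = a w := by
    intro z w
    have h := hd2.apply_eq_apply_of_bounded hbd (F z) (F w)
    have hgF : ∀ z, g (F z) = z := fun z => hanti.injective (hg (F z))
    rw [(hG _).deriv, (hG _).deriv, hgF, hgF] at h
    exact h
  have key : ∀ z, A z * (1 - (a 0).re ^ 2 - (a 0).im ^ 2) = k * ((1 - (a 0).re) ^ 2 + (a 0).im ^ 2) ∧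
      B z * (1 - (a 0).re ^ 2 - (a 0).im ^ 2) = 2 * k * (a 0).im := by
    intro z
    have h1 := ha z 1
    rw [hac z 0, hDF, hDW] at h1
    have e1 := congrArg Complex.re h1
    have e2 := congrArg Complex.im h1
    simp at e1 e2
    constructor
    · linear_combination (-(1 - (a 0).re)) * e1 + (a 0).im * e2
    · linear_combination (-(a 0).im) * e1 + (1 + (a 0).re) * e2
  have hne : 1 - (a 0).re ^ 2 - (a 0).im ^ 2 ≠ 0 := by
    intro h0
    have h1 := (key 0).1
    have h2 := (key 0).2
    rw [h0] at h1 h2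
    have h3 : (a 0).im = 0 := by
      have : k * (a 0).im = 0 := by linarith
      simpa [hk.ne'] using this
    have h4 : (1 - (a 0).re) ^ 2 = 0 := by
      rw [h3] at h1
      have : k * (1 - (a 0).re) ^ 2 = 0 := by linarith
      simpa [hk.ne'] using this
    have h5 : (a 0).re = 1 := by
      have := pow_eq_zero_iff (two_ne_zero) |>.1 h4
      linarith
    have h1 := ha 0 1
    rw [hDF, hDW] at h1
    have e1 := congrArg Complex.re h1
    simp [h3, h5] at e1
    linarith [hA 0]
  intro z w
  have hAA : A z = A w := mul_right_cancel₀ hne ((key z).1.trans (key w).1.symm)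
  have hBB : B z = B w := mul_right_cancel₀ hne ((key z).2.trans (key w).2.symm)
  refine ⟨hAA, hBB, ?_⟩
  have h1 := hdet z
  have h2 := hdet w
  rw [hAA, hBB] at h1
  exact mul_left_cancel₀ (hA w).ne' (by linarith)

theorem sl_alg (M : Matrix (Fin 2) (Fin 2) ℝ) (hM : M.IsHermitian) (μ : ℝ) (hμ : μ ≠ 0)
    (h : ∑ i, Real.arctan (hM.eigenvalues i) = μ) :
    Real.sin μ ≠ 0 ∧
    (M 0 0 + Real.cos μ / Real.sin μ) * (M 1 1 + Real.cos μ / Real.sin μ) - (M 0 1) ^ 2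
      = (|Real.sin μ|⁻¹) ^ 2 := by
  have hdet := hM.det_eq_prod_eigenvalues
  have htr := hM.trace_eq_sum_eigenvalues
  rw [Matrix.det_fin_two] at hdet
  rw [Matrix.trace_fin_two] at htr
  have h10 : M 1 0 = M 0 1 := by simpa using (hM.apply 0 1)
  rw [h10] at hdet
  simp only [Fin.sum_univ_two, Fin.prod_univ_two, RCLike.ofReal_real_eq_id, id] at h hdet htr
  set a := hM.eigenvalues 0
  set b := hM.eigenvalues 1
  have hs : Real.sin μ ≠ 0 := by
    have h1 := Real.arctan_lt_pi_div_two a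
    have h2 := Real.arctan_lt_pi_div_two b
    have h3 := Real.neg_pi_div_two_lt_arctan a
    have h4 := Real.neg_pi_div_two_lt_arctan b
    intro h0
    exact hμ ((Real.sin_eq_zero_iff_of_lt_of_lt (by linarith) (by linarith)).1 h0)
  refine ⟨hs, ?_⟩
  have ha : Real.sin (arctan a) = a * Real.cos (arctan a) := by
    rw [Real.sin_arctan, Real.cos_arctan]; ring
  have hb : Real.sin (arctan b) = b * Real.cos (arctan b) := by
    rw [Real.sin_arctan, Real.cos_arctan]; ring
  have e1 : Real.sin μ = (a + b) * (Real.cos (arctan a) * Real.cos (arctan b)) := by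
    rw [← h, Real.sin_add, ha, hb]; ring
  have e2 : Real.cos μ = (1 - a * b) * (Real.cos (arctan a) * Real.cos (arctan b)) := by
    rw [← h, Real.cos_add, ha, hb]; ring
  have e3 : Real.sin μ * (1 - a * b) = Real.cos μ * (a + b) := by
    rw [e1, e2]; ring
  have e4 := Real.sin_sq_add_cos_sq μ
  rw [inv_pow, sq_abs]
  field_simp
  rw [← e4]
  linear_combination Real.sin μ ^ 2 * hdet + Real.sin μ * Real.cos μ * htr - Real.sin μ * e3

theorem sl_const (u : EuclideanSpace ℝ (Fin 2) → ℝ)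
    (hu : ContDiff ℝ (⊤ : ℕ∞) u)
    (hsym : ∀ x, (hessianMatrix u x).IsHermitian)
    (hc : ∀ x, hessianMatrix u x = hessianMatrix u 0) : IsQuadraticPoly u := by
  have hd : ∀ v, ContDiff ℝ (⊤ : ℕ∞) (fun y => fderiv ℝ u y v) := fun v =>
    (hu.fderiv_right (m := (⊤ : ℕ∞)) (by norm_num)).clm_apply contDiff_const
  have hdu : Differentiable ℝ u := hu.differentiable (by norm_num)
  set M := hessianMatrix u 0 with hM
  have hxd : ∀ x : EuclideanSpace ℝ (Fin 2),
      x = x 0 • EuclideanSpace.single 0 1 + x 1 • EuclideanSpace.single 1 1 := by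
    intro x; ext i; fin_cases i <;> simp
  have hs : M 1 0 = M 0 1 := by simpa using ((hsym 0).apply 0 1)
  have hp : ∀ i (x : EuclideanSpace ℝ (Fin 2)), HasFDerivAt (fun x : EuclideanSpace ℝ (Fin 2) => x i)
      (EuclideanSpace.proj i : EuclideanSpace ℝ (Fin 2) →L[ℝ] ℝ) x := fun i x =>
    (EuclideanSpace.proj i : EuclideanSpace ℝ (Fin 2) →L[ℝ] ℝ).hasFDerivAt
  have hgrad : ∀ j x, fderiv ℝ u x (EuclideanSpace.single j 1) =
      M 0 j * x 0 + M 1 j * x 1 + fderiv ℝ u 0 (EuclideanSpace.single j 1) := by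
    intro j x
    have hD : ∀ x, HasFDerivAt (fun y => fderiv ℝ u y (EuclideanSpace.single j 1) - (M 0 j * y 0 + M 1 j * y 1)) 
        (0 : EuclideanSpace ℝ (Fin 2) →L[ℝ] ℝ) x := by
      intro x
      have h1 := (((hd (EuclideanSpace.single j 1)).differentiable (by norm_num)) x).hasFDerivAt
      have h2 := h1.sub (((hp 0 x).const_mul (M 0 j)).add ((hp 1 x).const_mul (M 1 j)))
      refine h2.congr_fderiv ?_
      ext v
      rw [hxd v]
      have e : ∀ i, fderiv ℝ (fun y => fderiv ℝ u y (EuclideanSpace.single j 1)) x (EuclideanSpace.single i 1) = M i j := by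
        intro i; rw [← hc x]; rfl
      simp only [sub_apply, map_add, map_smul, e]
      simp
    have := is_const_of_fderiv_eq_zero (𝕜 := ℝ) (fun x => (hD x).differentiableAt) (fun x => (hD x).fderiv) x 0
    simp at this
    linarith
  refine ⟨M, fun j => fderiv ℝ u 0 (EuclideanSpace.single j 1), u 0, ?_, ?_⟩
  · ext i j; fin_cases i <;> fin_cases j <;> simp [hs]
  intro x
  set b := fun j => fderiv ℝ u 0 (EuclideanSpace.single j 1) with hb
  have hD : ∀ x, HasFDerivAt (fun y => u y - ((1/2) * (M 0 0 * (y 0 * y 0) + 2 * M 0 1 * (y 0 * y 1) + M 1 1 * (y 1 * y 1))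
        + (b 0 * y 0 + b 1 * y 1)))
        (0 : EuclideanSpace ℝ (Fin 2) →L[ℝ] ℝ) x := by
    intro x
    have h1 := (hdu x).hasFDerivAt
    have h2 := h1.sub ((((((hp 0 x).mul (hp 0 x)).const_mul (M 0 0)).add
      (((hp 0 x).mul (hp 1 x)).const_mul (2 * M 0 1))).add
      (((hp 1 x).mul (hp 1 x)).const_mul (M 1 1))).const_mul (1/2) |>.add (((hp 0 x).const_mul (b 0)).add ((hp 1 x).const_mul (b 1))))
    refine h2.congr_fderiv ?_
    ext v
    rw [hxd v]
    have g0 : fderiv ℝ u x (EuclideanSpace.single 0 1) = M 0 0 * x 0 + M 1 0 * x 1 + b 0 := hgrad 0 x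
    have g1 : fderiv ℝ u x (EuclideanSpace.single 1 1) = M 0 1 * x 0 + M 1 1 * x 1 + b 1 := hgrad 1 x
    clear_value b
    simp only [sub_apply, map_add, map_smul, g0, g1]
    simp [hs]
    ring
  have := is_const_of_fderiv_eq_zero (𝕜 := ℝ) (fun x => (hD x).differentiableAt) (fun x => (hD x).fderiv) x 0
  simp at this
  simp [Fin.sum_univ_two, hs]
  linarith

theorem special_lagrangian_two_dim (u : EuclideanSpace ℝ (Fin 2) → ℝ)
    (hu : ContDiff ℝ (⊤ : ℕ∞) u)
    (hsym : ∀ x, (hessianMatrix u x).IsHermitian)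
    (μ : ℝ) (hμ : μ ≠ 0)
    (hSL : ∀ x, ∑ i, Real.arctan ((hsym x).eigenvalues i) = μ) :
    IsQuadraticPoly u := by
  apply sl_const u hu hsym
  have hsin : Real.sin μ ≠ 0 := (sl_alg _ (hsym 0) μ hμ (hSL 0)).1
  have halg := fun x => (sl_alg _ (hsym x) μ hμ (hSL x)).2
  set c := Real.cos μ / Real.sin μ
  set k := |Real.sin μ|⁻¹
  have hk : 0 < k := by positivity
  have hd : ∀ v, ContDiff ℝ (⊤ : ℕ∞) (fun y => fderiv ℝ u y v) := fun v =>
    (hu.fderiv_right (m := (⊤ : ℕ∞)) (by norm_num)).clm_apply contDiff_const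
  have hs : ∀ x, hessianMatrix u x 1 0 = hessianMatrix u x 0 1 := fun x => by
    simpa using ((hsym x).apply 0 1)
  have hHc : Continuous (fun x => hessianMatrix u x 0 0) := by
    have := ((hd (EuclideanSpace.single 0 1)).fderiv_right (m := (⊤ : ℕ∞)) (by norm_num)).clm_apply
      (contDiff_const (c := EuclideanSpace.single (0 : Fin 2) (1 : ℝ)))
    exact this.continuous
  let e : ℂ ≃L[ℝ] EuclideanSpace ℝ (Fin 2) := Complex.orthonormalBasisOneI.repr.toContinuousLinearEquiv
  have he : ∀ z : ℂ, e z = z.re • EuclideanSpace.single 0 1 + z.im • EuclideanSpace.single 1 1 := by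
    intro z
    ext i
    fin_cases i <;> simp [e]
  let H : ℂ → Matrix (Fin 2) (Fin 2) ℝ := fun z => hessianMatrix u (e z)
  let g : Fin 2 → ℂ → ℝ := fun j z => fderiv ℝ u (e z) (EuclideanSpace.single j 1)
  have hg : ∀ j, ContDiff ℝ (⊤ : ℕ∞) (g j) := fun j => (hd _).comp e.contDiff
  have hg' : ∀ j z h, fderiv ℝ (g j) z h = H z 0 j * h.re + H z 1 j * h.im := by
    intro j z h
    have h1 := (((hd (EuclideanSpace.single j 1)).differentiable (by norm_num)) (e z)).hasFDerivAt
    have h2 := h1.comp z e.hasFDerivAt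
    have h3 : fderiv ℝ (g j) z = _ := h2.fderiv
    rw [h3]
    simp only [ContinuousLinearMap.comp_apply, ContinuousLinearEquiv.coe_coe, he h, map_add, map_smul, smul_eq_mul]
    simp only [H, hessianMatrix, Matrix.of_apply]
    ring
  let f : ℂ → ℂ := fun z => (c : ℂ) * z + ((g 0 z : ℂ) + (g 1 z : ℂ) * Complex.I)
  have hfd : ContDiff ℝ (⊤ : ℕ∞) f := by
    have := hg 0
    have := hg 1
    have h0 : ContDiff ℝ (⊤ : ℕ∞) (fun z => (g 0 z : ℂ)) := Complex.ofRealCLM.contDiff.comp (hg 0)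
    have h1 : ContDiff ℝ (⊤ : ℕ∞) (fun z => (g 1 z : ℂ)) := Complex.ofRealCLM.contDiff.comp (hg 1)
    exact (contDiff_const.mul contDiff_id).add (h0.add (h1.mul contDiff_const))
  have hfs : ∀ z, HasStrictFDerivAt f (fderiv ℝ f z) z := fun z =>
    hfd.contDiffAt.hasStrictFDerivAt (by norm_num)
  have hL : ∀ z h, fderiv ℝ f z h = ⟨(H z 0 0 + c) * h.re + H z 0 1 * h.im,
      H z 0 1 * h.re + (H z 1 1 + c) * h.im⟩ := by
    intro z h
    have hr : ∀ j, HasFDerivAt (fun z => (g j z : ℂ)) (Complex.ofRealCLM.comp (fderiv ℝ (g j) z)) z := fun j =>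
      Complex.ofRealCLM.hasFDerivAt.comp z ((hg j).differentiable (by norm_num) z).hasFDerivAt
    have h1 := ((hasFDerivAt_id (𝕜 := ℝ) z).const_mul (c : ℂ)).add ((hr 0).add ((hr 1).mul_const Complex.I))
    have h2 : fderiv ℝ f z = _ := h1.fderiv
    rw [h2]
    have hs' : H z 1 0 = H z 0 1 := hs _
    apply Complex.ext
    · simp [hg', hs']
      ring
    · simp [hg', hs']
      ring
  have hne : ∀ z, H z 0 0 + c ≠ 0 := by
    intro z h0
    have h1 := halg (e z)
    change (H z 0 0 + c) * (H z 1 1 + c) - (H z 0 1) ^ 2 = k ^ 2 at h1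
    rw [h0] at h1
    nlinarith [sq_nonneg (H z 0 1), pow_pos hk 2]
  have hcA : Continuous (fun z => H z 0 0 + c) := (hHc.comp e.continuous).add continuous_const
  have hconst : ∀ z w, H z 0 0 + c = H w 0 0 + c ∧ H z 0 1 = H w 0 1 ∧ H z 1 1 + c = H w 1 1 + c := by
    rcases lt_or_gt_of_ne (hne 0) with h0 | h0
    · have hneg : ∀ z, H z 0 0 + c < 0 := by
        intro z
        by_contra hz
        push Not at hz
        obtain ⟨y, hy⟩ := mem_range_of_exists_le_of_exists_ge hcA ⟨0, h0.le⟩ ⟨z, hz⟩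
        exact hne y hy
      have := sl_core (fun z => - f z) (fun z => - fderiv ℝ f z) (fun z => -(H z 0 0 + c))
        (fun z => -H z 0 1) (fun z => -(H z 1 1 + c)) k hk (by
          intro z h
          rw [neg_apply, hL]
          apply Complex.ext <;> simp <;> ring) (fun z => (hfs z).neg)
          (fun z => by rw [← halg (e z)]; ring) (fun z => by linarith [hneg z])
      intro z w
      obtain ⟨h1, h2, h3⟩ := this z w
      exact ⟨neg_injective h1, neg_injective h2, neg_injective h3⟩
    · have hpos : ∀ z, 0 < H z 0 0 + c := by
        intro z
        by_contra hz
        push Not at hz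
        obtain ⟨y, hy⟩ := mem_range_of_exists_le_of_exists_ge hcA ⟨z, hz⟩ ⟨0, h0.le⟩
        exact hne y hy
      exact sl_core f (fun z => fderiv ℝ f z) (fun z => H z 0 0 + c)
        (fun z => H z 0 1) (fun z => H z 1 1 + c) k hk hL hfs
          (fun z => halg (e z)) hpos
  intro x
  obtain ⟨h1, h2, h3⟩ := hconst (e.symm x) (e.symm 0)
  simp only [H, ContinuousLinearEquiv.apply_symm_apply] at h1 h2 h3
  ext i j
  fin_cases i <;> fin_cases j
  · simpa using h1
  · simpa using h2
  · simpa [hs] using h2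
  · simpa using h3
end
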